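/- For the 4n-parametric family of Lie brackets on ℝ^{4n} and a fixed α (writing 1̄=4α−3, 2̄=4α−2, 3̄=4α−1, 4̄=4α), the manifold does not admit constant totally real sectional curvatures: if the sectional curvatures of the four basic totally real 2-planes are all equal, k(X_1̄,X_2̄) = k(X_1̄,X_4̄) = k(X_2̄,X_3̄) = k(X_3̄,X_4̄), then λ_1̄ = λ_2̄ = λ_3̄ = λ_4̄ = 0 (and all these curvatures are zero). -/

import Mathlib

noncomputable section

/-- The signature of the basis vectors inside each block: `(+, +, -, -)`. -/
def sgn : Fin 4 → ℝ := ![1, 1, -1, -1]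

/-- Structure constants of the bracket inside one block, depending on the four
parameters `l 0 = λ_1̄`, `l 1 = λ_2̄`, `l 2 = λ_3̄`, `l 3 = λ_4̄`:
`sc l r s` is the coordinate vector of `[X_r, X_s]`. -/
def sc (l : Fin 4 → ℝ) : Fin 4 → Fin 4 → Fin 4 → ℝ :=
  ![![![0, 0, 0, 0], ![0, 0, l 1, -l 0], ![0, l 1, 0, l 3], ![0, -l 0, -l 3, 0]],
    ![![0, 0, -l 1, l 0], ![0, 0, 0, 0], ![-l 1, 0, 0, -l 2], ![l 0, 0, l 2, 0]],
    ![![0, -l 1, 0, -l 3], ![l 1, 0, 0, l 2], ![0, 0, 0, 0], ![-l 3, l 2, 0, 0]],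
    ![![0, l 0, l 3, 0], ![-l 0, 0, -l 2, 0], ![l 3, -l 2, 0, 0], ![0, 0, 0, 0]]]

/-- `V n = ℝ^{4n}`, with coordinates indexed by a block `α : Fin n` and an
offset `r : Fin 4` (offset `r` corresponds to the basis vector `X_{4α+r+1}`,
i.e. `r = 0,1,2,3` correspond to `1̄,2̄,3̄,4̄`). -/
abbrev V (n : ℕ) : Type := Fin n × Fin 4 → ℝ

/-- The `4n`-parametric family of brackets on `ℝ^{4n}`: bilinear, vanishing on
pairs of basis vectors from different blocks, and given inside each block `α`
by the structure constants `sc` with parameters `λ_{4α+1},…,λ_{4α+4}`. -/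
def brk {n : ℕ} (lam : Fin n × Fin 4 → ℝ) (x y : V n) : V n := fun p =>
  ∑ r : Fin 4, ∑ s : Fin 4,
    x (p.1, r) * y (p.1, s) * sc (fun t => lam (p.1, t)) r s p.2

/-- The standard basis vectors `X_i` of `ℝ^{4n}`. -/
def X {n : ℕ} (i : Fin n × Fin 4) : V n := fun j => if j = i then 1 else 0

/-- The Norden metric `g`: the standard basis is orthogonal with
`g(X_1̄,X_1̄) = g(X_2̄,X_2̄) = 1`, `g(X_3̄,X_3̄) = g(X_4̄,X_4̄) = -1` in each block. -/
def gf {n : ℕ} (x y : V n) : ℝ := ∑ p : Fin n × Fin 4, sgn p.2 * x p * y p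

/-- The almost complex structure `J`: `J X_1̄ = X_3̄`, `J X_2̄ = X_4̄`,
`J X_3̄ = -X_1̄`, `J X_4̄ = -X_2̄` in each block. -/
def Jm {n : ℕ} (x : V n) : V n := fun p =>
  ![-x (p.1, 2), -x (p.1, 3), x (p.1, 0), x (p.1, 1)] p.2

/-- The curvature tensor `R(x,y,z,u) = −¼ g([x,y],[z,u])`. -/
def Rc {n : ℕ} (lam : Fin n × Fin 4 → ℝ) (x y z u : V n) : ℝ :=
  -(1 / 4) * gf (brk lam x y) (brk lam z u)

/-- The sectional curvature `k(x,y) = R(x,y,y,x)/(g(x,x)g(y,y) − g(x,y)²)`. -/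
def sect {n : ℕ} (lam : Fin n × Fin 4 → ℝ) (x y : V n) : ℝ :=
  Rc lam x y y x / (gf x x * gf y y - gf x y ^ 2)

/-!
In each block `[X_1̄, X_2̄]` lies in the negative definite span of `X_3̄, X_4̄`, while
`[X_3̄, X_4̄]` lies in the positive definite span of `X_1̄, X_2̄`. Both planes are definite, so `g`
has positive Gram determinant on each of them, and therefore
`k(X_1̄, X_2̄) = -(λ_1̄² + λ_2̄²) / 4 ≤ 0 ≤ (λ_3̄² + λ_4̄²) / 4 = k(X_3̄, X_4̄)`.
Equality of these two curvatures thus forces all four parameters to vanish.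
-/

/-- The vector `∑ r, v r • X (α, r)`, written coordinatewise: the inclusion of the block `α` into
`V n`, through which brackets and metric are computed inside a single block. -/
def blockVec {n : ℕ} (α : Fin n) (v : Fin 4 → ℝ) : V n :=
  fun p => if p.1 = α then v p.2 else 0

section Bracket

variable {n : ℕ} (lam : Fin n × Fin 4 → ℝ)

theorem sc_swap (l : Fin 4 → ℝ) (r s t : Fin 4) : sc l s r t = -sc l r s t := by
  fin_cases r <;> fin_cases s <;> fin_cases t <;> simp [sc]

theorem brk_swap (x y : V n) : brk lam y x = -brk lam x y := by
  funext p
  simp only [brk, Pi.neg_apply, ← Finset.sum_neg_distrib]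
  rw [Finset.sum_comm]
  refine Finset.sum_congr rfl fun r _ => Finset.sum_congr rfl fun s _ => ?_
  rw [sc_swap]
  ring

theorem brk_X_X (α : Fin n) (a b : Fin 4) :
    brk lam (X (α, a)) (X (α, b)) = blockVec α (sc (fun t => lam (α, t)) a b) := by
  funext ⟨β, c⟩
  by_cases h : β = α
  · subst h
    simp [brk, X, blockVec]
  · simp [brk, X, blockVec, h]

end Bracket

section Metric

variable {n : ℕ}

theorem gf_neg_right (x y : V n) : gf x (-y) = -gf x y := by
  simp [gf]

theorem gf_X_X (i j : Fin n × Fin 4) : gf (X i) (X j) = if i = j then sgn i.2 else 0 := by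
  obtain rfl | hij := eq_or_ne i j
  · simp [gf, X]
  · simp [gf, X, hij, hij.symm]

theorem gf_blockVec (α : Fin n) (u v : Fin 4 → ℝ) :
    gf (blockVec α u) (blockVec α v) = ∑ r, sgn r * u r * v r := by
  rw [gf, Fintype.sum_prod_type, Fintype.sum_eq_single α]
  · simp [blockVec]
  · intro β hβ
    simp [blockVec, hβ]

end Metric

section SectionalCurvature

variable {n : ℕ} (lam : Fin n × Fin 4 → ℝ)

theorem Rc_swap (x y : V n) : Rc lam x y y x = gf (brk lam x y) (brk lam x y) / 4 := by
  rw [Rc, brk_swap lam x y, gf_neg_right]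
  ring

theorem sect_X_X (α : Fin n) {a b : Fin 4} (hab : a ≠ b) :
    sect lam (X (α, a)) (X (α, b)) =
      (∑ r, sgn r * sc (fun t => lam (α, t)) a b r ^ 2) / 4 / (sgn a * sgn b) := by
  have gram : gf (X (α, a)) (X (α, a)) * gf (X (α, b)) (X (α, b)) -
      gf (X (α, a)) (X (α, b)) ^ 2 = sgn a * sgn b := by
    simp [gf_X_X, hab]
  rw [sect, gram, Rc_swap, brk_X_X, gf_blockVec]
  simp only [sq, mul_assoc]

theorem sect_X_zero_X_one (α : Fin n) :
    sect lam (X (α, 0)) (X (α, 1)) = -(lam (α, 0) ^ 2 + lam (α, 1) ^ 2) / 4 := by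
  rw [sect_X_X lam α (by decide)]
  simp [Fin.sum_univ_four, sgn, sc]

theorem sect_X_two_X_three (α : Fin n) :
    sect lam (X (α, 2)) (X (α, 3)) = (lam (α, 2) ^ 2 + lam (α, 3) ^ 2) / 4 := by
  rw [sect_X_X lam α (by decide)]
  simp [Fin.sum_univ_four, sgn, sc, add_comm]

end SectionalCurvature

theorem no_constant_totally_real_curvature_general {n : ℕ} (lam : Fin n × Fin 4 → ℝ) (α : Fin n)
    (h : sect lam (X (α, 0)) (X (α, 1)) = sect lam (X (α, 2)) (X (α, 3))) :
    lam (α, 0) = 0 ∧ lam (α, 1) = 0 ∧ lam (α, 2) = 0 ∧ lam (α, 3) = 0 ∧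
      sect lam (X (α, 0)) (X (α, 1)) = 0 := by
  rw [sect_X_two_X_three] at h
  have nonpos : sect lam (X (α, 0)) (X (α, 1)) ≤ 0 := by
    rw [sect_X_zero_X_one]
    linarith [sq_nonneg (lam (α, 0)), sq_nonneg (lam (α, 1))]
  have nonneg : 0 ≤ sect lam (X (α, 0)) (X (α, 1)) := by
    rw [h]
    positivity
  have flat : sect lam (X (α, 0)) (X (α, 1)) = 0 := le_antisymm nonpos nonneg
  have sum₀₁ : lam (α, 0) * lam (α, 0) + lam (α, 1) * lam (α, 1) = 0 := by
    linarith [sect_X_zero_X_one lam α]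
  have sum₂₃ : lam (α, 2) * lam (α, 2) + lam (α, 3) * lam (α, 3) = 0 := by linarith
  obtain ⟨h₀, h₁⟩ := mul_self_add_mul_self_eq_zero.mp sum₀₁
  obtain ⟨h₂, h₃⟩ := mul_self_add_mul_self_eq_zero.mp sum₂₃
  exact ⟨h₀, h₁, h₂, h₃, flat⟩

/-- the manifold does not admit constant totally real sectional
curvatures: if the sectional curvatures of the four basic totally real
2-planes `span{X_1̄,X_2̄}`, `span{X_1̄,X_4̄}`, `span{X_2̄,X_3̄}`,
`span{X_3̄,X_4̄}` are all equal, then `λ_1̄ = λ_2̄ = λ_3̄ = λ_4̄ = 0` and all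
these curvatures are zero. -/
theorem no_constant_totally_real_curvature {n : ℕ} (hn : 1 ≤ n)
    (lam : Fin n × Fin 4 → ℝ) :
    ∀ α : Fin n,
      sect lam (X (α, 0)) (X (α, 1)) = sect lam (X (α, 0)) (X (α, 3)) →
      sect lam (X (α, 0)) (X (α, 3)) = sect lam (X (α, 1)) (X (α, 2)) →
      sect lam (X (α, 1)) (X (α, 2)) = sect lam (X (α, 2)) (X (α, 3)) →
        lam (α, 0) = 0 ∧ lam (α, 1) = 0 ∧ lam (α, 2) = 0 ∧ lam (α, 3) = 0 ∧
          sect lam (X (α, 0)) (X (α, 1)) = 0 := by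
  intro α h₁₂ h₁₄ h₂₃
  exact no_constant_totally_real_curvature_general lam α (h₁₂.trans (h₁₄.trans h₂₃))
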